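/- Let n, d, k be integers with d ≥ 3 and 8 ≤ k ≤ n. Let A ⊆ [2^n]^d be nonempty with Vol(A) ≤ 1/2, and let m(A) ∈ ℕ satisfy 2^{−m(A)} < Vol(A)^{1/d} ≤ 2^{−m(A)+1}. Then E[|μ_k(A)|] ≤ 2^{10}·2^{−|m(A)−k|/2}·Per(A). -/

import Mathlib

open MeasureTheory Finset

noncomputable section

/-- Points of the grid `[2^n]^d` (coordinates taken 0-based). -/
abbrev GridPt (n d : ℕ) := Fin d → Fin (2^n)

/-- Normalized counting "volume" of a subset of the grid: `Vol(A) = 2^{-nd}|A|`. -/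
def Vol (n d : ℕ) (A : Finset (GridPt n d)) : ℝ := (A.card : ℝ) / 2^(n*d)

/-- The ℓ1 metric on the grid. -/
def gdist {n d : ℕ} (u v : GridPt n d) : ℝ := ∑ i, |((u i : ℕ) : ℝ) - ((v i : ℕ) : ℝ)|

/-- Indices of the dyadic cubes in `D_k`. -/
abbrev CubeIdx (d k : ℕ) := Fin d → Fin (2^k)

/-- The dyadic cube of side-cardinality `2^(n-k)` indexed by `j ∈ {0,…,2^k-1}^d`. -/
def cube (n d k : ℕ) (j : CubeIdx d k) : Finset (GridPt n d) :=
  Finset.univ.filter (fun x => ∀ i, (x i : ℕ) / 2^(n-k) = (j i : ℕ))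

/-- `p = 2^{-4d}`. -/
def pp (d : ℕ) : ℝ := ((2:ℝ)^(4*d))⁻¹

/-- The law of each `X_Q`: takes values `±1` with probability `p/2` each
and `0` with probability `1-p`. -/
def stepMeasure (d : ℕ) : Measure ℝ :=
  (Real.toNNReal (pp d / 2)) • Measure.dirac (1:ℝ)
  + (Real.toNNReal (pp d / 2)) • Measure.dirac (-1:ℝ)
  + (Real.toNNReal (1 - pp d)) • Measure.dirac (0:ℝ)

instance (d : ℕ) : IsFiniteMeasure (stepMeasure d) := by
  unfold stepMeasure; infer_instance

/-- The joint law of the i.i.d. family `{X_Q}_{Q ∈ D_k}`; a sample point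
`ω : CubeIdx d k → ℝ` records the values `X_Q = ω Q`. -/
def prodMeasure (d k : ℕ) : Measure (CubeIdx d k → ℝ) :=
  Measure.pi fun _ => stepMeasure d

/-- `μ_k(A) = ∑_{Q ∈ D_k} p⁻¹ 2^k X_Q Vol(A ∩ Q)`, as a function of the sample point `ω`. -/
def muMeas (n d k : ℕ) (A : Finset (GridPt n d)) (ω : CubeIdx d k → ℝ) : ℝ :=
  ∑ j : CubeIdx d k, (pp d)⁻¹ * 2^k * ω j * Vol n d (A ∩ cube n d k j)

/-- Ordered edges of the grid graph (each unordered edge `{u, u+e_i}` listed exactly once,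
in the increasing direction). -/
def edgePairs (n d : ℕ) : Finset (GridPt n d × GridPt n d) :=
  Finset.univ.filter (fun e =>
    ∃ i, ((e.2 i : ℕ) = (e.1 i : ℕ) + 1) ∧ ∀ j, j ≠ i → e.2 j = e.1 j)

/-- The edge boundary `∂A` of a subset `A` of the grid. -/
def bdry (n d : ℕ) (A : Finset (GridPt n d)) : Finset (GridPt n d × GridPt n d) :=
  (edgePairs n d).filter (fun e => (e.1 ∈ A ∧ e.2 ∉ A) ∨ (e.1 ∉ A ∧ e.2 ∈ A))

/-- The normalized perimeter `Per(A) = (1/d)·2^{-n(d-1)}·|∂A|`. -/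
def Per (n d : ℕ) (A : Finset (GridPt n d)) : ℝ :=
  (1/(d:ℝ)) * ((2:ℝ)^(n*(d-1)))⁻¹ * ((bdry n d A).card : ℝ)

/-!
Here `μ_k(A)` is a linear combination of centred variables of variance `p`. Its first
moment gives `E|μ_k(A)| ≤ 2^k Vol(A)`, which is efficient when `A` is at most as large as a cube of
`D_k`, and its second moment, together with `Vol(A ∩ Q) ≤ 2^{-kd}`, gives
`E|μ_k(A)| ≤ 2^{2d + k} (2^{-kd} Vol(A))^{1/2}`, which is efficient for larger `A`.

With `v = Vol(A)^{1/d}`, the perimeter is at least `v^{d-1} (1 - v)`: by a weak form of the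
Loomis–Whitney inequality, the projections of `A` to the coordinate hyperplanes have average size at
least `|A|^{(d-1)/d}`, and a line meeting `A` either lies in `A`, which happens for at most
`2^{-n} |A|` lines in each direction, or contains a boundary edge. Finally `1 - v` is at least
`1/2` if `m(A) ≥ 2`, and at least `2^{-d}` if `m(A) = 1` because `v^d ≤ 1/2`.
-/

section Projections

variable {α : Type*} {d : ℕ}

/-- The slice `{y | (t, y) ∈ A}` of a finite set `A ⊆ α × αᵈ = αᵈ⁺¹`. -/
def headSlice (A : Finset (Fin (d + 1) → α)) (t : α) : Finset (Fin d → α) :=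
  A.preimage (fun y => (Fin.cons t y : Fin (d + 1) → α))
    (Fin.cons_right_injective (α := fun _ => α) t).injOn

@[simp]
theorem mem_headSlice {A : Finset (Fin (d + 1) → α)} {t : α} {y : Fin d → α} :
    y ∈ headSlice A t ↔ Fin.cons t y ∈ A :=
  mem_preimage

theorem sum_card_headSlice {A : Finset (Fin (d + 1) → α)} {T : Finset α} (hT : ∀ x ∈ A, x 0 ∈ T) :
    ∑ t ∈ T, #(headSlice A t) = #A := by
  classical
  rw [card_eq_sum_card_fiberwise (f := fun x => x 0) (t := T) (fun x => hT x)]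
  refine sum_congr rfl fun t _ => card_nbij' (fun y => Fin.cons t y) Fin.tail ?_ ?_ ?_ ?_
  · simp [Set.MapsTo]
  · rintro x hx
    obtain ⟨hxA, rfl⟩ := by simpa using hx
    simpa using hxA
  · simp [Set.LeftInvOn]
  · rintro x hx
    obtain ⟨-, rfl⟩ := by simpa using hx
    exact Fin.cons_self_tail x

variable [DecidableEq α]

theorem card_headSlice_le (A : Finset (Fin (d + 1) → α)) (t : α) :
    #(headSlice A t) ≤ #(A.image (Fin.removeNth 0)) :=
  card_le_card fun y hy => mem_image.2 ⟨Fin.cons t y, mem_headSlice.1 hy, by simp⟩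

theorem headSlice_image_removeNth_succ (A : Finset (Fin (d + 2) → α)) (i : Fin (d + 1)) (t : α) :
    headSlice (A.image i.succ.removeNth) t = (headSlice A t).image i.removeNth := by
  have removeNth_cons (s : α) (y : Fin (d + 1) → α) :
      i.succ.removeNth (Fin.cons s y : Fin (d + 2) → α) = Fin.cons s (i.removeNth y) :=
    Fin.cons_comp_succ_succAbove ..
  ext y
  simp only [mem_headSlice, mem_image]
  constructor
  · rintro ⟨x, hx, hxy⟩
    rw [← Fin.cons_self_tail x, removeNth_cons] at hxy
    obtain ⟨rfl, rfl⟩ := Fin.cons_injective2 hxy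
    exact ⟨Fin.tail x, by rwa [Fin.cons_self_tail], rfl⟩
  · rintro ⟨z, hz, rfl⟩
    exact ⟨Fin.cons t z, hz, removeNth_cons t z⟩

theorem sum_card_image_removeNth_headSlice {A : Finset (Fin (d + 2) → α)} {T : Finset α}
    (hT : ∀ x ∈ A, x 0 ∈ T) (i : Fin (d + 1)) :
    ∑ t ∈ T, #((headSlice A t).image i.removeNth) = #(A.image i.succ.removeNth) := by
  simp_rw [← headSlice_image_removeNth_succ]
  refine sum_card_headSlice fun y hy => ?_
  obtain ⟨x, hx, rfl⟩ := mem_image.1 hy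
  exact hT x hx

theorem succ_mul_card_le_of_headSlice {A : Finset (Fin (d + 2) → α)} {s : ℝ}
    (h : ∀ t, (d + 1) * (#(headSlice A t) : ℝ) ≤
      s * ∑ i : Fin (d + 1), (#((headSlice A t).image i.removeNth) : ℝ)) :
    (d + 1) * (#A : ℝ) ≤ s * ∑ i : Fin (d + 1), (#(A.image i.succ.removeNth) : ℝ) := by
  have hT : ∀ x ∈ A, x 0 ∈ A.image (· 0) := fun x hx => mem_image_of_mem _ hx
  simp_rw [← sum_card_headSlice hT, ← sum_card_image_removeNth_headSlice hT, Nat.cast_sum]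
  rw [sum_comm, mul_sum, mul_sum]
  exact sum_le_sum fun t _ => h t

theorem succ_mul_pow_mul_le (n : ℕ) {a s : ℝ} (ha : 0 < a) (hs : 0 ≤ s) :
    (n + 1) * a ^ n * s ≤ s ^ (n + 1) + n * a ^ (n + 1) := by
  have bernoulli := one_add_mul_sub_le_pow
    (show -1 ≤ s / a by linarith [div_nonneg hs ha.le]) (n + 1)
  rw [div_pow, le_div_iff₀ (by positivity)] at bernoulli
  have : (1 + ((n + 1 : ℕ) : ℝ) * (s / a - 1)) * a ^ (n + 1) =
      (n + 1) * a ^ n * s - n * a ^ (n + 1) := by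
    push_cast
    field_simp
    ring
  linarith

theorem exists_pos_pow_succ_eq {N : ℝ} (hN : 0 < N) (d : ℕ) : ∃ a : ℝ, 0 < a ∧ a ^ (d + 1) = N :=
  ⟨N ^ ((d + 1 : ℕ) : ℝ)⁻¹, by positivity, Real.rpow_inv_natCast_pow hN.le d.succ_ne_zero⟩

/-- The Loomis–Whitney inequality `#A ^ d ≤ ∏ i, #(A.image i.removeNth)`, weakened by AM–GM. In this
form the induction over slices `x 0 = t` needs no Hölder inequality. -/
theorem succ_mul_card_le_mul_sum_card_image_removeNth (A : Finset (Fin (d + 1) → α)) {r : ℝ}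
    (hr : 0 ≤ r) (hA : #A ≤ r ^ (d + 1)) :
    (d + 1) * (#A : ℝ) ≤ r * ∑ i : Fin (d + 1), (#(A.image i.removeNth) : ℝ) := by
  obtain rfl | hne := A.eq_empty_or_nonempty
  · simp
  induction d generalizing r with
  | zero =>
    have hproj : (1 : ℝ) ≤ #(A.image (Fin.removeNth 0)) := by
      exact_mod_cast (hne.image _).card_pos
    simp only [zero_add, pow_one] at hA
    simpa using hA.trans (le_mul_of_one_le_right hr hproj)
  | succ d ih =>
    have hproj : (0 : ℝ) < #(A.image (Fin.removeNth 0)) := by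
      exact_mod_cast (hne.image _).card_pos
    obtain ⟨s, hs0, hs⟩ := exists_pos_pow_succ_eq hproj d
    obtain ⟨a, ha0, ha⟩ := exists_pos_pow_succ_eq (N := #A) (by exact_mod_cast hne.card_pos) (d + 1)
    have har : a ≤ r := le_of_pow_le_pow_left₀ (d + 1).succ_ne_zero hr (ha.trans_le hA)
    set S : ℝ := ∑ i : Fin (d + 1), (#(A.image i.succ.removeNth) : ℝ) with hS
    have hslices : (d + 1) * (#A : ℝ) ≤ s * S := by
      refine succ_mul_card_le_of_headSlice fun t => ?_
      obtain ht | ht := (headSlice A t).eq_empty_or_nonempty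
      · simp [ht]
      · refine ih _ hs0.le ?_ ht
        rw [hs]
        exact_mod_cast card_headSlice_le A t
    have hyoung : (d + 2) * a ^ (d + 1) ≤ s ^ (d + 1) + S := by
      refine le_of_mul_le_mul_right ?_ hs0
      have := succ_mul_pow_mul_le (d + 1) ha0 hs0.le
      push_cast [ha] at this
      linarith [pow_succ s (d + 1)]
    rw [Fin.sum_univ_succ, ← hS, ← hs, ← ha]
    push_cast
    calc (d + 1 + 1) * a ^ (d + 1 + 1) = a * ((d + 2) * a ^ (d + 1)) := by ring
      _ ≤ r * (s ^ (d + 1) + S) := by gcongr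

end Projections

section FullLines

variable {α : Type*} [Fintype α] [DecidableEq α] {d : ℕ}

/-- The projections along direction `i` of those lines parallel to the `i`-th axis that are
contained in `A`. -/
def fullLines (A : Finset (Fin (d + 1) → α)) (i : Fin (d + 1)) : Finset (Fin d → α) :=
  {y | ∀ t, i.insertNth t y ∈ A}

theorem card_mul_card_fullLines_le (A : Finset (Fin (d + 1) → α)) (i : Fin (d + 1)) :
    Fintype.card α * #(fullLines A i) ≤ #A := by
  rw [← card_univ, ← card_product]
  refine card_le_card_of_injOn (Fin.insertNthEquiv (fun _ => α) i) ?_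
    (Fin.insertNthEquiv (fun _ => α) i).injective.injOn
  rintro ⟨t, y⟩ hy
  simp only [coe_product, coe_univ, Set.mem_prod, mem_coe, fullLines, mem_filter_univ] at hy
  exact hy.2 t

end FullLines

theorem exists_consecutive_mem_notMem {N : ℕ} {S : Set (Fin N)} {s t : Fin N}
    (hs : s ∈ S) (ht : t ∉ S) :
    ∃ u v : Fin N, (v : ℕ) = u + 1 ∧ ((u ∈ S ∧ v ∉ S) ∨ (u ∉ S ∧ v ∈ S)) := by
  obtain ⟨p⟩ := SimpleGraph.pathGraph_preconnected N s t
  obtain ⟨e, -, he, he'⟩ := p.exists_boundary_dart S hs ht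
  obtain huv | hvu := SimpleGraph.pathGraph_adj.1 e.adj
  · exact ⟨e.fst, e.snd, huv.symm, .inl ⟨he, he'⟩⟩
  · exact ⟨e.snd, e.fst, hvu.symm, .inr ⟨he', he⟩⟩

section Isoperimetry

variable {n d : ℕ}

/-- The boundary edges of `A` that are parallel to the `i`-th axis. -/
def bdryAlong (A : Finset (GridPt n d)) (i : Fin d) : Finset (GridPt n d × GridPt n d) :=
  {e ∈ bdry n d A | e.1 i ≠ e.2 i}

theorem sum_card_bdryAlong_le (A : Finset (GridPt n d)) :
    ∑ i, #(bdryAlong A i) ≤ #(bdry n d A) := by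
  rw [← card_biUnion]
  · exact card_le_card (biUnion_subset.2 fun i _ => filter_subset _ _)
  intro i _ j _ hij
  rw [Function.onFun, disjoint_left]
  intro e hi hj
  obtain ⟨he, hi⟩ := mem_filter.1 hi
  obtain ⟨-, hj⟩ := mem_filter.1 hj
  obtain ⟨l, -, hl⟩ := (mem_filter.1 (mem_filter.1 he).1).2
  have eq_direction (c) (hc : e.1 c ≠ e.2 c) : c = l := by
    by_contra hcl
    exact hc (hl c hcl).symm
  exact hij ((eq_direction i hi).trans (eq_direction j hj).symm)

theorem insertNth_mem_bdryAlong {A : Finset (GridPt n (d + 1))} {i : Fin (d + 1)}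
    {y : GridPt n d} {u v : Fin (2 ^ n)} (huv : (v : ℕ) = u + 1)
    (hA : (i.insertNth u y ∈ A ∧ i.insertNth v y ∉ A) ∨
      (i.insertNth u y ∉ A ∧ i.insertNth v y ∈ A)) :
    ((i.insertNth u y, i.insertNth v y) : GridPt n (d + 1) × GridPt n (d + 1)) ∈
      bdryAlong A i := by
  have hedge : ((i.insertNth u y, i.insertNth v y) : GridPt n (d + 1) × GridPt n (d + 1)) ∈
      edgePairs n (d + 1) := by
    refine mem_filter_univ _ |>.2 ⟨i, by simpa using huv, fun j hj => ?_⟩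
    obtain ⟨j, rfl⟩ := Fin.exists_succAbove_eq hj
    simp
  refine mem_filter.2 ⟨mem_filter.2 ⟨hedge, hA⟩, ?_⟩
  simp [Fin.ext_iff, huv]

theorem image_removeNth_subset (A : Finset (GridPt n (d + 1))) (i : Fin (d + 1)) :
    A.image i.removeNth ⊆ fullLines A i ∪ (bdryAlong A i).image fun e => i.removeNth e.1 := by
  intro y hy
  rw [mem_union, or_iff_not_imp_left]
  intro hfull
  obtain ⟨x, hx, rfl⟩ := mem_image.1 hy
  obtain ⟨t, ht⟩ : ∃ t, i.insertNth t (i.removeNth x) ∉ A := by simpa [fullLines] using hfull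
  obtain ⟨u, v, huv, hA⟩ := exists_consecutive_mem_notMem
    (S := {t | i.insertNth t (i.removeNth x) ∈ A}) (s := x i) (by simpa using hx) ht
  exact mem_image.2 ⟨_, insertNth_mem_bdryAlong huv hA, Fin.removeNth_insertNth ..⟩

theorem card_image_removeNth_le (A : Finset (GridPt n (d + 1))) (i : Fin (d + 1)) :
    (#(A.image i.removeNth) : ℝ) ≤ #A / 2 ^ n + #(bdryAlong A i) := by
  have hfull : (#(fullLines A i) : ℝ) ≤ #A / 2 ^ n := by
    rw [le_div_iff₀' (by positivity)]
    exact_mod_cast Fintype.card_fin (2 ^ n) ▸ card_mul_card_fullLines_le A i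
  have hcover : #(A.image i.removeNth) ≤ #(fullLines A i) + #(bdryAlong A i) :=
    (card_le_card (image_removeNth_subset A i)).trans <|
      (card_union_le _ _).trans (by gcongr; exact card_image_le)
  have : (#(A.image i.removeNth) : ℝ) ≤ #(fullLines A i) + #(bdryAlong A i) := by
    exact_mod_cast hcover
  linarith

theorem sum_card_image_removeNth_le (A : Finset (GridPt n (d + 1))) :
    ∑ i : Fin (d + 1), (#(A.image i.removeNth) : ℝ) ≤
      (d + 1) * (#A / 2 ^ n) + #(bdry n (d + 1) A) := by
  have hbdry : ∑ i, (#(bdryAlong A i) : ℝ) ≤ #(bdry n (d + 1) A) := by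
    exact_mod_cast sum_card_bdryAlong_le A
  calc ∑ i : Fin (d + 1), (#(A.image i.removeNth) : ℝ)
      ≤ ∑ i, ((#A / 2 ^ n : ℝ) + #(bdryAlong A i)) :=
        sum_le_sum fun i _ => card_image_removeNth_le A i
    _ = (d + 1) * (#A / 2 ^ n) + ∑ i, (#(bdryAlong A i) : ℝ) := by simp [sum_add_distrib]
    _ ≤ (d + 1) * (#A / 2 ^ n) + #(bdry n (d + 1) A) := by gcongr

theorem pow_mul_one_sub_le_per {A : Finset (GridPt n (d + 1))} {v : ℝ} (hv : 0 < v)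
    (hA : v ^ (d + 1) = Vol n (d + 1) A) : v ^ d * (1 - v) ≤ Per n (d + 1) A := by
  have hcard : (#A : ℝ) = (v * 2 ^ n) ^ (d + 1) := by
    rw [mul_pow, hA, Vol, ← pow_mul, div_mul_cancel₀ _ (by positivity)]
  have hproj : (d + 1) * (v * 2 ^ n) ^ d ≤ ∑ i : Fin (d + 1), (#(A.image i.removeNth) : ℝ) := by
    refine le_of_mul_le_mul_left ?_ (by positivity : 0 < v * 2 ^ n)
    calc v * 2 ^ n * ((d + 1) * (v * 2 ^ n) ^ d) = (d + 1) * #A := by rw [hcard]; ring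
      _ ≤ _ := succ_mul_card_le_mul_sum_card_image_removeNth A (by positivity) hcard.le
  have hbdry : (d + 1) * 2 ^ (n * d) * (v ^ d * (1 - v)) ≤ #(bdry n (d + 1) A) := by
    calc (d + 1) * 2 ^ (n * d) * (v ^ d * (1 - v))
        = (d + 1) * (v * 2 ^ n) ^ d - (d + 1) * (#A / 2 ^ n) := by
          rw [hcard, pow_mul, mul_pow, mul_pow]
          field_simp
          ring
      _ ≤ #(bdry n (d + 1) A) := by linarith [sum_card_image_removeNth_le A]
  rw [Per, add_tsub_cancel_right, one_div, ← mul_inv, ← div_eq_inv_mul,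
    le_div_iff₀' (by positivity)]
  exact_mod_cast hbdry

end Isoperimetry

section SideLength

variable {n d : ℕ} {A : Finset (GridPt n d)}

/-- The side length `Vol(A)^{1/d}` of a cube with the same volume as `A`. -/
def sideLength (n d : ℕ) (A : Finset (GridPt n d)) : ℝ := Vol n d A ^ ((1 : ℝ) / (d : ℝ))

theorem vol_nonneg (n d : ℕ) (A : Finset (GridPt n d)) : 0 ≤ Vol n d A := by
  unfold Vol
  positivity

theorem sideLength_pos (hA : A.Nonempty) : 0 < sideLength n d A := by
  have := hA.card_pos
  unfold sideLength Vol
  positivity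

theorem sideLength_pow (hd : d ≠ 0) (A : Finset (GridPt n d)) :
    sideLength n d A ^ d = Vol n d A := by
  rw [sideLength, one_div, Real.rpow_inv_natCast_pow (vol_nonneg n d A) hd]

theorem sideLength_pow_mul_one_sub_le_per (hd : d ≠ 0) (hA : A.Nonempty) :
    sideLength n d A ^ (d - 1) * (1 - sideLength n d A) ≤ Per n d A := by
  obtain ⟨d, rfl⟩ := Nat.exists_eq_succ_of_ne_zero hd
  exact pow_mul_one_sub_le_per (sideLength_pos hA) (sideLength_pow hd A)

end SideLength

section LinearCombination

variable {Ω ι : Type*} [MeasurableSpace Ω] [Fintype ι]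

theorem sq_integral_abs_le_integral_sq {P : Measure Ω} [IsProbabilityMeasure P] {X : Ω → ℝ}
    (hX : MemLp X 2 P) : (∫ ω, |X ω| ∂P) ^ 2 ≤ ∫ ω, X ω ^ 2 ∂P := by
  have hvar := ProbabilityTheory.variance_nonneg |X| P
  rw [ProbabilityTheory.variance_eq_sub hX.abs] at hvar
  simpa using hvar

variable {ν : ι → Measure ℝ} [∀ i, IsProbabilityMeasure (ν i)] (c : ι → ℝ)

theorem integral_abs_sum_mul_pi_le (hν : ∀ i, Integrable id (ν i)) :
    ∫ ω, |∑ i, c i * ω i| ∂(Measure.pi ν) ≤ ∑ i, |c i| * ∫ x, |x| ∂(ν i) := by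
  have hint (i : ι) : Integrable (fun ω : ι → ℝ => |c i| * |ω i|) (Measure.pi ν) :=
    (integrable_comp_eval (hν i).abs).const_mul _
  calc ∫ ω, |∑ i, c i * ω i| ∂(Measure.pi ν)
      ≤ ∫ ω, ∑ i, |c i| * |ω i| ∂(Measure.pi ν) := by
        refine integral_mono_of_nonneg (.of_forall fun ω => abs_nonneg _)
          (integrable_finsetSum _ fun i _ => hint i) (.of_forall fun ω => ?_)
        simpa only [abs_mul] using abs_sum_le_sum_abs (fun i => c i * ω i) univ
    _ = ∑ i, |c i| * ∫ x, |x| ∂(ν i) := by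
        rw [integral_finsetSum _ fun i _ => hint i]
        refine sum_congr rfl fun i _ => ?_
        rw [integral_const_mul, integral_comp_eval (μ := ν) (f := fun x => |x|) (by fun_prop)]

theorem sq_integral_abs_sum_mul_pi_le (hν : ∀ i, MemLp id 2 (ν i))
    (hmean : ∀ i, ∫ x, x ∂(ν i) = 0) :
    (∫ ω, |∑ i, c i * ω i| ∂(Measure.pi ν)) ^ 2 ≤ ∑ i, c i ^ 2 * ∫ x, x ^ 2 ∂(ν i) := by
  have hterm (i : ι) : MemLp (fun x => c i * x) 2 (ν i) := (hν i).const_mul (c i)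
  have hterm' (i : ι) : MemLp (fun ω : ι → ℝ => c i * ω i) 2 (Measure.pi ν) :=
    (hterm i).comp_measurePreserving (measurePreserving_eval ν i)
  have hsum : MemLp (fun ω : ι → ℝ => ∑ i, c i * ω i) 2 (Measure.pi ν) :=
    memLp_finsetSum _ fun i _ => hterm' i
  have hmean_sum : ∫ ω, ∑ i, c i * ω i ∂(Measure.pi ν) = 0 := by
    rw [integral_finsetSum _ fun i _ => (hterm' i).integrable one_le_two]
    refine sum_eq_zero fun i _ => ?_
    rw [integral_const_mul, integral_comp_eval (μ := ν) (f := fun x => x) (by fun_prop), hmean,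
      mul_zero]
  refine (sq_integral_abs_le_integral_sq hsum).trans_eq ?_
  rw [← ProbabilityTheory.variance_of_integral_eq_zero hsum.aemeasurable hmean_sum,
    ← sum_fn, ProbabilityTheory.variance_sum_pi hterm]
  refine sum_congr rfl fun i _ => ?_
  rw [ProbabilityTheory.variance_const_mul,
    ProbabilityTheory.variance_of_integral_eq_zero (by fun_prop) (hmean i)]

end LinearCombination

section StepMeasure

variable (d : ℕ)

theorem pp_pos : 0 < pp d := by
  unfold pp
  positivity

theorem pp_le_one : pp d ≤ 1 :=
  inv_le_one_of_one_le₀ (one_le_pow₀ one_le_two)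

instance isProbabilityMeasure_stepMeasure : IsProbabilityMeasure (stepMeasure d) := by
  have hp := pp_pos d
  have hweights : Real.toNNReal (pp d / 2) + Real.toNNReal (pp d / 2)
      + Real.toNNReal (1 - pp d) = 1 := by
    rw [← Real.toNNReal_add (by positivity) (by positivity),
      ← Real.toNNReal_add (by positivity) (sub_nonneg.2 (pp_le_one d))]
    simp
  constructor
  simp only [stepMeasure, Measure.coe_add, Measure.coe_nnreal_smul_apply, Pi.add_apply,
    measure_univ, mul_one]
  exact_mod_cast hweights

theorem integrable_stepMeasure (f : ℝ → ℝ) : Integrable f (stepMeasure d) := by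
  have hdirac (x : ℝ) : Integrable f (Measure.dirac x) := integrable_dirac (by simp)
  exact ((hdirac 1).smul_measure_nnreal.add_measure (hdirac (-1)).smul_measure_nnreal).add_measure
    (hdirac 0).smul_measure_nnreal

theorem integral_stepMeasure (f : ℝ → ℝ) :
    ∫ x, f x ∂(stepMeasure d) = pp d / 2 * f 1 + pp d / 2 * f (-1) + (1 - pp d) * f 0 := by
  have hp := pp_pos d
  have hdirac (r : NNReal) (x : ℝ) : Integrable f (r • Measure.dirac x) :=
    (integrable_dirac (by simp)).smul_measure_nnreal
  rw [stepMeasure, integral_add_measure ((hdirac _ _).add_measure (hdirac _ _)) (hdirac _ _),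
    integral_add_measure (hdirac _ _) (hdirac _ _)]
  simp only [integral_smul_nnreal_measure, integral_dirac, NNReal.smul_def, smul_eq_mul]
  rw [Real.coe_toNNReal _ (by positivity), Real.coe_toNNReal _ (sub_nonneg.2 (pp_le_one d))]

theorem memLp_two_id_stepMeasure : MemLp id 2 (stepMeasure d) :=
  (memLp_two_iff_integrable_sq aestronglyMeasurable_id).2 (integrable_stepMeasure d _)

end StepMeasure

section Cubes

variable {n d : ℕ}

theorem cube_pairwiseDisjoint (n d k : ℕ) :
    (Set.univ : Set (CubeIdx d k)).PairwiseDisjoint (cube n d k) := by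
  intro j _ l _ hjl
  rw [Function.onFun, disjoint_left]
  intro x hj hl
  simp only [cube, mem_filter_univ] at hj hl
  exact hjl (funext fun i => Fin.ext ((hj i).symm.trans (hl i)))

theorem exists_mem_cube (k : ℕ) (x : GridPt n d) : ∃ j : CubeIdx d k, x ∈ cube n d k j := by
  have hlt (i : Fin d) : (x i : ℕ) / 2 ^ (n - k) < 2 ^ k := by
    rw [Nat.div_lt_iff_lt_mul (by positivity), ← pow_add]
    exact (x i).2.trans_le (Nat.pow_le_pow_right two_pos (by omega))
  exact ⟨fun i => ⟨_, hlt i⟩, by simp [cube]⟩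

theorem sum_vol_inter_cube (k : ℕ) (A : Finset (GridPt n d)) :
    ∑ j : CubeIdx d k, Vol n d (A ∩ cube n d k j) = Vol n d A := by
  have hdisj : Set.PairwiseDisjoint (univ : Finset (CubeIdx d k)) fun j => A ∩ cube n d k j :=
    fun j _ l _ hjl => (cube_pairwiseDisjoint n d k (Set.mem_univ j) (Set.mem_univ l) hjl).mono
      inter_subset_right inter_subset_right
  have hcover : univ.biUnion (fun j : CubeIdx d k => A ∩ cube n d k j) = A := by
    ext x
    simpa using fun _ => exists_mem_cube k x
  simp only [Vol]
  rw [← sum_div, ← Nat.cast_sum, ← card_biUnion hdisj, hcover]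

theorem card_cube_le (n : ℕ) {d k : ℕ} (j : CubeIdx d k) : #(cube n d k j) ≤ 2 ^ ((n - k) * d) := by
  let offset (x : GridPt n d) (i : Fin d) : Fin (2 ^ (n - k)) :=
    ⟨(x i : ℕ) % 2 ^ (n - k), Nat.mod_lt _ (by positivity)⟩
  have hinj : Set.InjOn offset (cube n d k j) := by
    intro x hx y hy hxy
    simp only [cube, mem_coe, mem_filter_univ] at hx hy
    funext i
    have hmod : (x i : ℕ) % 2 ^ (n - k) = y i % 2 ^ (n - k) := Fin.ext_iff.1 (congrFun hxy i)
    rw [Fin.ext_iff, ← Nat.div_add_mod (x i : ℕ) (2 ^ (n - k)), hmod, hx i, ← hy i,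
      Nat.div_add_mod]
  calc #(cube n d k j) ≤ #(univ : Finset (Fin d → Fin (2 ^ (n - k)))) :=
        card_le_card_of_injOn offset (fun _ _ => mem_univ _) hinj
    _ = 2 ^ ((n - k) * d) := by simp [pow_mul]

theorem vol_inter_cube_le {k : ℕ} (A : Finset (GridPt n d)) (hkn : k ≤ n) (j : CubeIdx d k) :
    Vol n d (A ∩ cube n d k j) ≤ ((2 : ℝ) ^ (k * d))⁻¹ := by
  have hcard : (#(A ∩ cube n d k j) : ℝ) ≤ 2 ^ ((n - k) * d) := by
    exact_mod_cast (card_le_card inter_subset_right).trans (card_cube_le n j)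
  have hnd : n * d = k * d + (n - k) * d := by rw [← add_mul, Nat.add_sub_cancel' hkn]
  rw [Vol, hnd, pow_add, ← div_div, div_le_iff₀ (by positivity), div_eq_mul_inv, mul_comm]
  gcongr

end Cubes

section Moments

variable {n d k : ℕ} (A : Finset (GridPt n d))

theorem muMeas_eq_sum_mul (ω : CubeIdx d k → ℝ) :
    muMeas n d k A ω = ∑ j, (pp d)⁻¹ * 2 ^ k * Vol n d (A ∩ cube n d k j) * ω j :=
  sum_congr rfl fun _ _ => mul_right_comm ..

theorem integral_abs_muMeas_le (k : ℕ) :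
    ∫ ω, |muMeas n d k A ω| ∂(prodMeasure d k) ≤ 2 ^ k * Vol n d A := by
  have hp := pp_pos d
  have habs : ∫ x, |x| ∂(stepMeasure d) = pp d := by simp [integral_stepMeasure]
  simp only [muMeas_eq_sum_mul, prodMeasure]
  refine (integral_abs_sum_mul_pi_le _ fun _ => integrable_stepMeasure d id).trans_eq ?_
  rw [← sum_vol_inter_cube k A, mul_sum]
  refine sum_congr rfl fun j _ => ?_
  have := vol_nonneg n d (A ∩ cube n d k j)
  rw [habs, abs_of_nonneg (by positivity)]
  field_simp

theorem sq_integral_abs_muMeas_le (hkn : k ≤ n) :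
    (∫ ω, |muMeas n d k A ω| ∂(prodMeasure d k)) ^ 2 ≤
      2 ^ (4 * d) * (2 ^ k) ^ 2 * ((2 ^ (k * d))⁻¹ * Vol n d A) := by
  have hp := pp_pos d
  have hmean : ∫ x, x ∂(stepMeasure d) = 0 := by simp [integral_stepMeasure]
  have hsq : ∫ x, x ^ 2 ∂(stepMeasure d) = pp d := by simp [integral_stepMeasure]
  have hpp : (2 : ℝ) ^ (4 * d) = (pp d)⁻¹ := by simp [pp]
  simp only [muMeas_eq_sum_mul, prodMeasure]
  refine (sq_integral_abs_sum_mul_pi_le _ (fun _ => memLp_two_id_stepMeasure d)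
    fun _ => hmean).trans ?_
  rw [← sum_vol_inter_cube k A, mul_sum, mul_sum, hpp]
  refine sum_le_sum fun j _ => ?_
  have hvol := vol_nonneg n d (A ∩ cube n d k j)
  calc ((pp d)⁻¹ * 2 ^ k * Vol n d (A ∩ cube n d k j)) ^ 2 * ∫ x, x ^ 2 ∂(stepMeasure d)
      = (pp d)⁻¹ * (2 ^ k) ^ 2 * (Vol n d (A ∩ cube n d k j) * Vol n d (A ∩ cube n d k j)) := by
        rw [hsq]
        field_simp
    _ ≤ (pp d)⁻¹ * (2 ^ k) ^ 2 * ((2 ^ (k * d))⁻¹ * Vol n d (A ∩ cube n d k j)) := by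
        gcongr
        exact vol_inter_cube_le A hkn j

end Moments

section Comparison

variable {n d : ℕ} {A : Finset (GridPt n d)}

theorem sideLength_lt_one (hd : d ≠ 0) (hA : Vol n d A < 1) : sideLength n d A < 1 :=
  Real.rpow_lt_one (vol_nonneg n d A) hA (by positivity)

theorem pos_of_two_rpow_neg_lt_sideLength {m : ℕ} (hd : d ≠ 0) (hA : Vol n d A < 1)
    (hm : 2 ^ (-m : ℝ) < sideLength n d A) : 0 < m := by
  rw [Nat.pos_iff_ne_zero]
  rintro rfl
  simpa using hm.trans (sideLength_lt_one hd hA)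

theorem integral_abs_muMeas_le_of_sideLength_le (hd : d ≠ 0) (k : ℕ) {m : ℝ}
    (hm : sideLength n d A ≤ 2 ^ (1 - m)) :
    ∫ ω, |muMeas n d k A ω| ∂(prodMeasure d k) ≤
      2 ^ (k + (1 - m)) * sideLength n d A ^ (d - 1) := by
  have hv : 0 ≤ sideLength n d A := Real.rpow_nonneg (vol_nonneg n d A) _
  calc ∫ ω, |muMeas n d k A ω| ∂(prodMeasure d k) ≤ 2 ^ k * Vol n d A := integral_abs_muMeas_le A k
    _ = 2 ^ k * sideLength n d A * sideLength n d A ^ (d - 1) := by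
        rw [mul_assoc, mul_pow_sub_one hd, sideLength_pow hd]
    _ ≤ 2 ^ k * 2 ^ (1 - m) * sideLength n d A ^ (d - 1) := by gcongr
    _ = 2 ^ (k + (1 - m)) * sideLength n d A ^ (d - 1) := by
        rw [Real.rpow_add two_pos, Real.rpow_natCast]

theorem vol_le_of_le_sideLength (hd : 2 ≤ d) {m : ℝ} (hm : 2 ^ (-m) ≤ sideLength n d A) :
    Vol n d A ≤ 2 ^ (m * (d - 2)) * (sideLength n d A ^ (d - 1)) ^ 2 := by
  obtain ⟨e, rfl⟩ := Nat.exists_eq_add_of_le' hd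
  have hscale : 1 ≤ 2 ^ m * sideLength n (e + 2) A := by
    rwa [Real.rpow_neg two_pos.le, inv_le_iff_one_le_mul₀' (by positivity)] at hm
  have hexp : (2 : ℝ) ^ (m * ((e + 2 : ℕ) - 2)) = (2 ^ m) ^ e := by
    rw [← Real.rpow_mul_natCast two_pos.le]
    push_cast
    ring_nf
  calc Vol n (e + 2) A ≤ (2 ^ m * sideLength n (e + 2) A) ^ e * Vol n (e + 2) A :=
        le_mul_of_one_le_left (vol_nonneg ..) (one_le_pow₀ hscale)
    _ = 2 ^ (m * ((e + 2 : ℕ) - 2)) * (sideLength n (e + 2) A ^ (e + 2 - 1)) ^ 2 := by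
        rw [hexp, ← sideLength_pow (by omega), mul_pow, Nat.add_succ_sub_one]
        ring

theorem integral_abs_muMeas_le_of_le_sideLength (hd : 2 ≤ d) {k : ℕ} (hkn : k ≤ n) {m : ℝ}
    (hm : 2 ^ (-m) ≤ sideLength n d A) :
    ∫ ω, |muMeas n d k A ω| ∂(prodMeasure d k) ≤
      2 ^ (2 * d - (k - m) * (d / 2 - 1)) * sideLength n d A ^ (d - 1) := by
  have hv : 0 ≤ sideLength n d A := Real.rpow_nonneg (vol_nonneg n d A) _
  have hexp : (2 : ℝ) ^ (4 * d) * (2 ^ k) ^ 2 * ((2 ^ (k * d))⁻¹ * 2 ^ (m * (d - 2))) =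
      (2 ^ (2 * d - (k - m) * (d / 2 - 1))) ^ 2 := by
    simp only [← Real.rpow_natCast, ← Real.rpow_mul two_pos.le, ← Real.rpow_neg two_pos.le,
      ← Real.rpow_add two_pos]
    push_cast
    ring_nf
  refine le_of_sq_le_sq ?_ (by positivity)
  calc (∫ ω, |muMeas n d k A ω| ∂(prodMeasure d k)) ^ 2
      ≤ 2 ^ (4 * d) * (2 ^ k) ^ 2 * ((2 ^ (k * d))⁻¹ * Vol n d A) :=
        sq_integral_abs_muMeas_le A hkn
    _ ≤ 2 ^ (4 * d) * (2 ^ k) ^ 2 *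
          ((2 ^ (k * d))⁻¹ * (2 ^ (m * (d - 2)) * (sideLength n d A ^ (d - 1)) ^ 2)) := by
        gcongr
        exact vol_le_of_le_sideLength hd hm
    _ = (2 ^ (2 * d - (k - m) * (d / 2 - 1)) * sideLength n d A ^ (d - 1)) ^ 2 := by
        rw [mul_pow, ← hexp]
        ring

theorem two_rpow_neg_one_le_one_sub {v m : ℝ} (hm : 2 ≤ m) (hv : v ≤ 2 ^ (1 - m)) :
    2 ^ (-1 : ℝ) ≤ 1 - v := by
  have hhalf : (2 : ℝ) ^ (1 - m) ≤ 2 ^ (-1 : ℝ) :=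
    Real.rpow_le_rpow_of_exponent_le one_le_two (by linarith)
  rw [Real.rpow_neg_one] at hhalf ⊢
  linarith

theorem one_half_le_one_sub_two_pow_inv_pow (d : ℕ) :
    (1 / 2 : ℝ) ≤ (1 - (2 ^ d)⁻¹) ^ d := by
  have hle : (2 * d : ℝ) ≤ 2 ^ d := by exact_mod_cast Nat.mul_le_pow (by norm_num) d
  have hinv : ((2 : ℝ) ^ d)⁻¹ ≤ 1 := inv_le_one_of_one_le₀ (one_le_pow₀ one_le_two)
  have bernoulli := one_add_mul_le_pow (show -2 ≤ -((2 : ℝ) ^ d)⁻¹ by linarith) d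
  rw [← sub_eq_add_neg] at bernoulli
  refine le_trans ?_ bernoulli
  have : d * ((2 : ℝ) ^ d)⁻¹ ≤ 1 / 2 := by
    rw [← div_eq_mul_inv, div_le_iff₀ (by positivity)]
    linarith
  linarith

theorem two_rpow_neg_le_one_sub {v : ℝ} {d : ℕ} (hv : v ^ d ≤ 1 / 2) :
    2 ^ (-d : ℝ) ≤ 1 - v := by
  have hd : d ≠ 0 := by
    rintro rfl
    norm_num at hv
  have hinv : ((2 : ℝ) ^ d)⁻¹ ≤ 1 := inv_le_one_of_one_le₀ (one_le_pow₀ one_le_two)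
  rw [Real.rpow_neg two_pos.le, Real.rpow_natCast, le_sub_comm]
  by_contra! hlt
  exact absurd (hv.trans (one_half_le_one_sub_two_pow_inv_pow d))
    (pow_lt_pow_left₀ hlt (sub_nonneg.2 hinv) hd).not_ge

theorem le_two_pow_mul_two_rpow_mul_per (hd : d ≠ 0) (hA : A.Nonempty) {E q r s : ℝ} {N : ℕ}
    (hE : E ≤ 2 ^ r * sideLength n d A ^ (d - 1)) (hq : 2 ^ q ≤ 1 - sideLength n d A)
    (hr : r ≤ N + s + q) : E ≤ 2 ^ N * 2 ^ s * Per n d A := by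
  have hv := sideLength_pos hA
  calc E ≤ 2 ^ r * sideLength n d A ^ (d - 1) := hE
    _ ≤ 2 ^ (N + s + q) * sideLength n d A ^ (d - 1) := by gcongr; exact one_le_two
    _ = 2 ^ N * 2 ^ s * (sideLength n d A ^ (d - 1) * 2 ^ q) := by
        rw [Real.rpow_add two_pos, Real.rpow_add two_pos, Real.rpow_natCast]
        ring
    _ ≤ 2 ^ N * 2 ^ s * (sideLength n d A ^ (d - 1) * (1 - sideLength n d A)) := by gcongr
    _ ≤ 2 ^ N * 2 ^ s * Per n d A := by
        gcongr
        exact sideLength_pow_mul_one_sub_le_per hd hA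

end Comparison

/-- `E[|μ_k(A)|] ≤ 2^{10}·2^{-|m(A)-k|/2}·Per(A)` for `8 ≤ k ≤ n`, where `m(A) ∈ ℕ`
satisfies `2^{-m(A)} < Vol(A)^{1/d} ≤ 2^{-m(A)+1}`. -/
theorem expected_mu_le (n d k : ℕ) (hd : 3 ≤ d) (hk : 8 ≤ k) (hkn : k ≤ n)
    (A : Finset (GridPt n d)) (hA : A.Nonempty) (hVol : Vol n d A ≤ 1/2)
    (m : ℕ) (hm₁ : (2:ℝ) ^ (-(m:ℝ)) < Vol n d A ^ ((1:ℝ)/(d:ℝ)))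
    (hm₂ : Vol n d A ^ ((1:ℝ)/(d:ℝ)) ≤ (2:ℝ) ^ ((1:ℝ) - (m:ℝ))) :
    ∫ ω, |muMeas n d k A ω| ∂(prodMeasure d k)
      ≤ 2^10 * (2:ℝ) ^ (-(|(m:ℝ) - (k:ℝ)| / 2)) * Per n d A := by
  have hd0 : d ≠ 0 := by omega
  have hdR : (0 : ℝ) ≤ d - 3 := sub_nonneg.2 (by exact_mod_cast hd)
  have hkR : (8 : ℝ) ≤ k := by exact_mod_cast hk
  have hm : 1 ≤ m := pos_of_two_rpow_neg_lt_sideLength hd0 (by linarith) hm₁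
  rcases le_or_gt k (m + 3) with hkm | hkm
  · have hkmR : (k : ℝ) ≤ m + 3 := by exact_mod_cast hkm
    refine le_two_pow_mul_two_rpow_mul_per hd0 hA
      (integral_abs_muMeas_le_of_sideLength_le hd0 k hm₂)
      (two_rpow_neg_one_le_one_sub (by linarith) hm₂) ?_
    cases abs_cases ((m : ℝ) - k) <;> linarith
  have hkmR : (4 : ℝ) ≤ k - m := le_sub_iff_add_le'.2 (by exact_mod_cast hkm)
  rw [abs_sub_comm, abs_of_nonneg (show (0 : ℝ) ≤ k - m by linarith)]
  have hE := integral_abs_muMeas_le_of_le_sideLength (by omega) hkn hm₁.le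
  obtain rfl | hm2 := hm.eq_or_lt
  · refine le_two_pow_mul_two_rpow_mul_per hd0 hA hE
      (two_rpow_neg_le_one_sub ((sideLength_pow hd0 A).trans_le hVol)) ?_
    linarith [mul_le_mul_of_nonneg_right hkR hdR]
  · refine le_two_pow_mul_two_rpow_mul_per hd0 hA hE
      (two_rpow_neg_one_le_one_sub (by exact_mod_cast hm2) hm₂) ?_
    linarith [mul_le_mul_of_nonneg_right hkmR hdR]
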